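/- Let S₀ > 0, κ > 0, σ > 0, r ∈ ℝ and τ > 0, and set a = σ²κτ/S₀. Then the price of the Asian call at time 0, Call₀ = (S₀/(τσ²))·e^{-rτ} · E[ ( A_{σ²τ} − σ²κτ/S₀ )^+ ], satisfies Call₀ = S₀·e^{-rτ} · [ 1 − κ/S₀ + (σ²κ²τ/S₀²) · E[ (a + A_{τσ²})^{-1} · exp( 2·M_{τσ²}/(a + A_{τσ²}) − 2/a ) ] ]. -/

import Mathlib

open MeasureTheory ProbabilityTheory Real Set

noncomputable section

/-- A standard one-dimensional Brownian motion `B` (with `B 0 = 0`, continuous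
paths, Gaussian increments and independent increments) on a probability space
with measure `P`. -/
structure IsBrownianMotion {Ω : Type*} [MeasurableSpace Ω]
    (P : Measure Ω) (B : ℝ → Ω → ℝ) : Prop where
  isProbabilityMeasure : IsProbabilityMeasure P
  measurable : ∀ t : ℝ, Measurable (B t)
  start : ∀ ω, B 0 ω = 0
  continuous_paths : ∀ ω, Continuous fun t => B t ω
  gaussian_increments : ∀ s t : ℝ, 0 ≤ s → s ≤ t →
    P.map (fun ω => B t ω - B s ω) = gaussianReal 0 (Real.toNNReal (t - s))
  indep_increments : ∀ t : ℕ → ℝ, Monotone t → 0 ≤ t 0 →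
    iIndepFun
      (fun (i : ℕ) (ω : Ω) => B (t (i + 1)) ω - B (t i) ω) P

/-- The exponential martingale `M_t = exp (B_t - t/2)`. -/
def M {Ω : Type*} (B : ℝ → Ω → ℝ) (t : ℝ) (ω : Ω) : ℝ :=
  Real.exp (B t ω - t / 2)

/-- The time integral `A_t = ∫_0^t exp (B_s - s/2) ds`. -/
def A {Ω : Type*} (B : ℝ → Ω → ℝ) (t : ℝ) (ω : Ω) : ℝ :=
  ∫ s in (0 : ℝ)..t, Real.exp (B s ω - s / 2)

/-- The time integral with drift `ν`: `A_t^{(ν)} = ∫_0^t exp (B_s + (ν - 1/2) s) ds`. -/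
def Adrift {Ω : Type*} (B : ℝ → Ω → ℝ) (ν t : ℝ) (ω : Ω) : ℝ :=
  ∫ s in (0 : ℝ)..t, Real.exp (B s ω + (ν - 1 / 2) * s)

variable {Ω : Type*} [MeasurableSpace Ω] (P : MeasureTheory.Measure Ω) (B : ℝ → Ω → ℝ)


/-- one-step density factor -/
def rr (h u u' v x : ℝ) : ℝ :=
  if 0 < v then Real.exp (Real.log (v / u') * x / h + Real.log (v / u') / 2
    - Real.log (v / u') ^ 2 / (2 * h)) * (u / v) else 0

lemma rr_nonneg (h u u' v x : ℝ) (hu : 0 ≤ u) : 0 ≤ rr h u u' v x := by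
  unfold rr
  split_ifs with hv
  · positivity
  · exact le_rfl

lemma measurable_rr_comp {α : Type*} [MeasurableSpace α] (h : ℝ) {u u' v x : α → ℝ}
    (hu : Measurable u) (hu' : Measurable u') (hv : Measurable v) (hx : Measurable x) :
    Measurable fun a => rr h (u a) (u' a) (v a) (x a) := by
  unfold rr
  refine Measurable.ite (measurableSet_lt measurable_const hv) ?_ measurable_const
  fun_prop

lemma step_one (h u u' q : ℝ) (hh : 0 < h) (hu : 0 < u) (hu' : 0 < u') (f : ℝ → ENNReal)
    (hf : Measurable f) :
    ∫⁻ x, f (x - Real.log ((u + q * Real.exp x) / u')) *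
        ENNReal.ofReal (rr h u u' (u + q * Real.exp x) x) ∂(gaussianReal (-h/2) (Real.toNNReal h))
      ≤ ∫⁻ x, f x ∂(gaussianReal (-h/2) (Real.toNNReal h)) := by
  have hv : Real.toNNReal h ≠ 0 := by simpa using hh
  have hcoe : ((Real.toNNReal h : NNReal) : ℝ) = h := Real.coe_toNNReal h hh.le
  rw [gaussianReal_of_var_ne_zero _ hv]
  have hm1 : Measurable fun x => f (x - Real.log ((u + q * Real.exp x) / u')) :=
    hf.comp (by fun_prop)
  have hm2 : Measurable fun x => ENNReal.ofReal (rr h u u' (u + q * Real.exp x) x) :=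
    (measurable_rr_comp h (by fun_prop) (by fun_prop) (by fun_prop) (by fun_prop)).ennreal_ofReal
  have hm3 : Measurable fun x => f (x - Real.log ((u + q * Real.exp x) / u')) *
      ENNReal.ofReal (rr h u u' (u + q * Real.exp x) x) := hm1.mul hm2
  rw [lintegral_withDensity_eq_lintegral_mul _ (measurable_gaussianPDF _ _) hm3,
    lintegral_withDensity_eq_lintegral_mul _ (measurable_gaussianPDF _ _) hf]
  set s : Set ℝ := {x | 0 < u + q * Real.exp x} with hs
  have hsm : MeasurableSet s := measurableSet_lt measurable_const (by fun_prop)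
  set Y : ℝ → ℝ := fun x => x - Real.log ((u + q * Real.exp x) / u') with hY
  have hexpY : ∀ x ∈ s, Real.exp (Y x) = u' * Real.exp x / (u + q * Real.exp x) := by
    intro x hx
    have hx' : 0 < u + q * Real.exp x := hx
    simp only [hY]
    rw [Real.exp_sub, Real.exp_log (by positivity)]
    field_simp
  have hinj : InjOn Y s := by
    intro x hx y hy hxy
    have hx' : 0 < u + q * Real.exp x := hx
    have hy' : 0 < u + q * Real.exp y := hy
    have h1 := hexpY x hx
    rw [hxy, hexpY y hy, div_eq_div_iff hy'.ne' hx'.ne'] at h1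
    have h2 : u' * u * (Real.exp y - Real.exp x) = 0 := by linarith
    have h3 : Real.exp y - Real.exp x = 0 := by
      rcases mul_eq_zero.1 h2 with h | h
      · exact absurd h (by positivity)
      · exact h
    exact (Real.exp_injective (by linarith)).symm
  have hder : ∀ x ∈ s, HasDerivWithinAt Y (u / (u + q * Real.exp x)) s x := by
    intro x hx
    have hx' : 0 < u + q * Real.exp x := hx
    have h1 : HasDerivAt (fun x => (u + q * Real.exp x) / u') (q * Real.exp x / u') x :=
      (((Real.hasDerivAt_exp x).const_mul q).const_add u).div_const u'
    have h2 := (hasDerivAt_id x).sub (h1.log (by positivity))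
    refine (h2.congr_deriv ?_).hasDerivWithinAt
    field_simp
    ring
  have key := lintegral_image_eq_lintegral_abs_deriv_mul hsm hder hinj
    (fun y => gaussianPDF (-h/2) (Real.toNNReal h) y * f y)
  calc _ = ∫⁻ x in s, ENNReal.ofReal |u / (u + q * Real.exp x)| *
        (gaussianPDF (-h/2) (Real.toNNReal h) (Y x) * f (Y x)) := by
        rw [← lintegral_indicator hsm]
        congr 1
        ext x
        by_cases hx : x ∈ s
        · have hx' : 0 < u + q * Real.exp x := hx
          rw [indicator_of_mem hx]
          simp only [Pi.mul_apply, rr, if_pos hx', hY, gaussianPDF]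
          rw [mul_left_comm, ← mul_assoc (ENNReal.ofReal |_|), mul_comm (_ * _) (f _),
            ← ENNReal.ofReal_mul (gaussianPDFReal_nonneg _ _ _), ← ENNReal.ofReal_mul (abs_nonneg _)]
          congr 2
          rw [abs_of_pos (by positivity)]
          simp only [gaussianPDFReal, hcoe]
          set d := Real.log ((u + q * Real.exp x) / u')
          have : Real.exp (-(x - d - -h / 2) ^ 2 / (2 * h)) = 
            Real.exp (-(x - -h / 2) ^ 2 / (2 * h)) * Real.exp (d * x / h + d / 2 - d ^ 2 / (2 * h)) := by
            rw [← Real.exp_add]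
            congr 1
            field_simp
            ring
          rw [this]
          ring
        · rw [indicator_of_notMem hx]
          have hx' : ¬ 0 < u + q * Real.exp x := hx
          simp [rr, hx']
    _ = ∫⁻ x in Y '' s, gaussianPDF (-h/2) (Real.toNNReal h) x * f x := key.symm
    _ ≤ _ := setLIntegral_le_lintegral _ _


lemma alg_aux (a c w v p : ℝ) (hw0 : w ≠ 0) (hv0 : v ≠ 0) (hw : w = 1 + c * a) (hv : v = w + c * p) :
    a / w + p / (v * w) = (a + p) / v := by
  have : a * v + p = (a + p) * w := by rw [hv, hw]; ring
  field_simp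
  linarith

/-- discrete exponential walk -/
def mS (x : ℕ → ℝ) (k : ℕ) : ℝ := Real.exp (∑ j ∈ Finset.range k, x j)

/-- discrete additive functional (right endpoint sums) -/
def AS (h : ℝ) (x : ℕ → ℝ) (k : ℕ) : ℝ := ∑ j ∈ Finset.range k, h * mS x (j + 1)

/-- the factor `1 + c A` -/
def uS (c h : ℝ) (x : ℕ → ℝ) (k : ℕ) : ℝ := 1 + c * AS h x k

/-- discrete density -/
def DS (c h : ℝ) (x : ℕ → ℝ) (k : ℕ) : ℝ :=
  ∏ j ∈ Finset.range k, rr h (uS c h x j) (uS c h x (j - 1)) (uS c h x (j + 1)) (x j)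

lemma mS_pos (x : ℕ → ℝ) (k : ℕ) : 0 < mS x k := Real.exp_pos _

lemma mS_zero (x : ℕ → ℝ) : mS x 0 = 1 := by simp [mS]

lemma mS_succ (x : ℕ → ℝ) (k : ℕ) : mS x (k + 1) = mS x k * Real.exp (x k) := by
  simp [mS, Finset.sum_range_succ, Real.exp_add]

lemma AS_zero (h : ℝ) (x : ℕ → ℝ) : AS h x 0 = 0 := by simp [AS]

lemma AS_succ (h : ℝ) (x : ℕ → ℝ) (k : ℕ) : AS h x (k + 1) = AS h x k + h * mS x (k + 1) := by
  simp [AS, Finset.sum_range_succ]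

lemma AS_mono {h : ℝ} (hh : 0 < h) (x : ℕ → ℝ) : Monotone (AS h x) :=
  monotone_nat_of_le_succ fun k => by
    rw [AS_succ]; have := mS_pos x (k+1); nlinarith

lemma AS_nonneg {h : ℝ} (hh : 0 < h) (x : ℕ → ℝ) (k : ℕ) : 0 ≤ AS h x k := by
  rw [← AS_zero h x]; exact AS_mono hh x (Nat.zero_le k)

lemma uS_zero (c h : ℝ) (x : ℕ → ℝ) : uS c h x 0 = 1 := by simp [uS, AS_zero]

lemma uS_succ (c h : ℝ) (x : ℕ → ℝ) (k : ℕ) :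
    uS c h x (k + 1) = uS c h x k + c * h * mS x k * Real.exp (x k) := by
  simp only [uS, AS_succ, mS_succ]; ring

lemma uS_pos_of_le (c : ℝ) {h : ℝ} (hh : 0 < h) (x : ℕ → ℝ) {j k : ℕ} (hjk : j ≤ k)
    (hk : 0 < uS c h x k) : 0 < uS c h x j := by
  unfold uS at *
  have h1 := AS_mono hh x hjk
  have h2 := AS_nonneg hh x j
  rcases le_total 0 c with hc | hc
  · positivity
  · nlinarith

lemma DS_succ (c h : ℝ) (x : ℕ → ℝ) (k : ℕ) : DS c h x (k + 1) =
    DS c h x k * rr h (uS c h x k) (uS c h x (k - 1)) (uS c h x (k + 1)) (x k) := by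
  simp [DS, Finset.prod_range_succ]

lemma uS_pos_of_DS (c : ℝ) {h : ℝ} (x : ℕ → ℝ) (k : ℕ)
    (hD : DS c h x k ≠ 0) : 0 < uS c h x k := by
  rcases k with _ | k
  · simp [uS_zero]
  · rw [DS_succ] at hD
    by_contra hc
    apply hD
    simp [rr, hc]

lemma DS_nonneg (c : ℝ) {h : ℝ} (x : ℕ → ℝ) (k : ℕ) : 0 ≤ DS c h x k := by
  induction k with
  | zero => simp [DS]
  | succ k ih =>
    by_cases hD : DS c h x k = 0
    · simp [DS_succ, hD]
    · rw [DS_succ]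
      exact mul_nonneg ih (rr_nonneg _ _ _ _ _ (uS_pos_of_DS c x k hD).le)

section meas
variable {α : Type*} {mα : MeasurableSpace α} {X : ℕ → α → ℝ}

lemma measurable_mS {k : ℕ} (hX : ∀ j < k, Measurable (X j)) :
    Measurable fun a => mS (fun j => X j a) k := by
  unfold mS
  refine Real.measurable_exp.comp (Finset.measurable_sum _ fun j hj => hX j (Finset.mem_range.1 hj))

lemma measurable_AS (h : ℝ) {k : ℕ} (hX : ∀ j < k, Measurable (X j)) :
    Measurable fun a => AS h (fun j => X j a) k := by
  unfold AS
  refine Finset.measurable_sum _ fun j hj => (measurable_mS fun i hi => hX i ?_).const_mul h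
  have := Finset.mem_range.1 hj
  omega

lemma measurable_uS (c h : ℝ) {k : ℕ} (hX : ∀ j < k, Measurable (X j)) :
    Measurable fun a => uS c h (fun j => X j a) k := by
  unfold uS
  exact ((measurable_AS h hX).const_mul c).const_add 1

lemma measurable_DS (c h : ℝ) {k : ℕ} (hX : ∀ j < k, Measurable (X j)) :
    Measurable fun a => DS c h (fun j => X j a) k := by
  unfold DS
  refine Finset.measurable_prod _ fun j hj => ?_
  have := Finset.mem_range.1 hj
  refine measurable_rr_comp h (measurable_uS c h fun i hi => hX i ?_)
    (measurable_uS c h fun i hi => hX i ?_) (measurable_uS c h fun i hi => hX i ?_) (hX j ?_) <;>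
  omega

end meas

lemma indep_past {Ω : Type*} [MeasurableSpace Ω] {P : Measure Ω} {X : ℕ → Ω → ℝ}
    (hX : ∀ j, Measurable (X j)) (hi : iIndepFun X P) {β : Type*} [mβ : MeasurableSpace β] (k : ℕ)
    (V : Ω → β)
    (hV : ∀ mΩ : MeasurableSpace Ω, (∀ j < k, Measurable[mΩ] (X j)) → Measurable[mΩ] V) :
    IndepFun V (X k) P := by
  have h1 : iIndep (fun j => MeasurableSpace.comap (X j) inferInstance) P := hi
  have h2 := indep_iSup_of_disjoint (fun j => (hX j).comap_le) h1
    (S := {j | j < k}) (T := {k}) (by simp)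
  rw [IndepFun_iff_Indep]
  refine indep_of_indep_of_le_left (indep_of_indep_of_le_right h2 ?_) ?_
  · simp
  · refine Measurable.comap_le ?_
    apply hV
    intro j hj
    refine Measurable.mono (comap_measurable (X j)) ?_ le_rfl
    exact le_iSup₂_of_le j hj le_rfl

lemma lintegral_indep {Ω : Type*} [MeasurableSpace Ω] {P : Measure Ω} [IsProbabilityMeasure P]
    {β : Type*} [MeasurableSpace β] {V : Ω → β} {X : Ω → ℝ} (hV : Measurable V) (hX : Measurable X)
    (hi : IndepFun V X P) {g : β × ℝ → ENNReal} (hg : Measurable g) :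
    ∫⁻ ω, g (V ω, X ω) ∂P = ∫⁻ ω, ∫⁻ x, g (V ω, x) ∂(P.map X) ∂P := by
  have h1 := (indepFun_iff_map_prod_eq_prod_map_map hV.aemeasurable hX.aemeasurable).1 hi
  have : IsProbabilityMeasure (P.map X) := Measure.isProbabilityMeasure_map hX.aemeasurable
  have : IsProbabilityMeasure (P.map V) := Measure.isProbabilityMeasure_map hV.aemeasurable
  calc _ = ∫⁻ p, g p ∂(P.map fun ω => (V ω, X ω)) := (lintegral_map hg (hV.prodMk hX)).symm
    _ = ∫⁻ v, ∫⁻ x, g (v, x) ∂(P.map X) ∂(P.map V) := by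
      rw [h1, lintegral_prod _ hg.aemeasurable]
    _ = _ := by
      rw [lintegral_map hg.lintegral_prod_right' hV]

lemma discrete_ineq {Ω : Type*} [MeasurableSpace Ω] {P : Measure Ω} [IsProbabilityMeasure P]
    {X : ℕ → Ω → ℝ} (hX : ∀ j, Measurable (X j)) (hi : iIndepFun X P) (c h : ℝ) (hh : 0 < h)
    (hlaw : ∀ j, P.map (X j) = gaussianReal (-h/2) (Real.toNNReal h)) (k : ℕ) :
    ∀ F : ℝ × ℝ → ENNReal, Measurable F →
    ∫⁻ ω, F (mS (fun j => X j ω) k / (uS c h (fun j => X j ω) k * uS c h (fun j => X j ω) (k - 1)),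
        AS h (fun j => X j ω) k / uS c h (fun j => X j ω) k)
        * ENNReal.ofReal (DS c h (fun j => X j ω) k) ∂P
      ≤ ∫⁻ ω, F (mS (fun j => X j ω) k, AS h (fun j => X j ω) k) ∂P := by
  induction k with
  | zero =>
    intro F hF
    simp [mS_zero, AS_zero, uS_zero, DS]
  | succ k ih =>
    intro F hF
    set ν := gaussianReal (-h/2) (Real.toNNReal h) with hν
    set G : ℝ × ℝ → ENNReal := fun p =>
      ∫⁻ x, F (p.1 * Real.exp x, p.2 + h * (p.1 * Real.exp x)) ∂ν with hG
    have hGm : Measurable G := by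
      apply Measurable.lintegral_prod_right'
        (f := fun q : (ℝ × ℝ) × ℝ => F (q.1.1 * Real.exp q.2, q.1.2 + h * (q.1.1 * Real.exp q.2)))
      exact hF.comp (by fun_prop)
    -- right side
    have hR : ∫⁻ ω, F (mS (fun j => X j ω) (k+1), AS h (fun j => X j ω) (k+1)) ∂P
        = ∫⁻ ω, G (mS (fun j => X j ω) k, AS h (fun j => X j ω) k) ∂P := by
      have hind : IndepFun (fun ω => (mS (fun j => X j ω) k, AS h (fun j => X j ω) k)) (X k) P :=
        indep_past hX hi k _ fun m hm => (measurable_mS hm).prodMk (measurable_AS h hm)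
      have := lintegral_indep ((measurable_mS fun j _ => hX j).prodMk (measurable_AS h fun j _ => hX j))
        (hX k) hind (g := fun q : (ℝ × ℝ) × ℝ =>
          F (q.1.1 * Real.exp q.2, q.1.2 + h * (q.1.1 * Real.exp q.2))) (hF.comp (by fun_prop))
      rw [hlaw k] at this
      simp only [AS_succ, mS_succ]
      exact this
    rw [hR]
    refine le_trans ?_ (ih G hGm)
    -- left side
    set V : Ω → ℝ × ℝ × ℝ × ℝ := fun ω => (DS c h (fun j => X j ω) k, mS (fun j => X j ω) k,
      AS h (fun j => X j ω) k, uS c h (fun j => X j ω) (k - 1)) with hV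
    have hVm : ∀ mΩ : MeasurableSpace Ω, (∀ j < k, Measurable[mΩ] (X j)) → Measurable[mΩ] V := by
      intro m hm
      exact (measurable_DS c h hm).prodMk ((measurable_mS hm).prodMk ((measurable_AS h hm).prodMk
        (measurable_uS c h fun j hj => hm j (by omega))))
    have hind := indep_past hX hi k V hVm
    set g : (ℝ × ℝ × ℝ × ℝ) × ℝ → ENNReal := fun q =>
      F (q.1.2.1 * Real.exp q.2 / ((1 + c * (q.1.2.2.1 + h * (q.1.2.1 * Real.exp q.2)))
          * (1 + c * q.1.2.2.1)),
        (q.1.2.2.1 + h * (q.1.2.1 * Real.exp q.2)) /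
          (1 + c * (q.1.2.2.1 + h * (q.1.2.1 * Real.exp q.2)))) *
      ENNReal.ofReal (q.1.1 * rr h (1 + c * q.1.2.2.1) q.1.2.2.2
        (1 + c * (q.1.2.2.1 + h * (q.1.2.1 * Real.exp q.2))) q.2) with hg
    have hgm : Measurable g := by
      refine (hF.comp (by fun_prop)).mul (Measurable.ennreal_ofReal (Measurable.mul (by fun_prop) ?_))
      exact measurable_rr_comp h (by fun_prop) (by fun_prop) (by fun_prop) (by fun_prop)
    have hL := lintegral_indep (hVm _ fun j _ => hX j) (hX k) hind hgm
    rw [hlaw k] at hL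
    have hL0 : ∫⁻ ω, F (mS (fun j => X j ω) (k+1) / (uS c h (fun j => X j ω) (k+1)
          * uS c h (fun j => X j ω) (k + 1 - 1)),
        AS h (fun j => X j ω) (k+1) / uS c h (fun j => X j ω) (k+1))
        * ENNReal.ofReal (DS c h (fun j => X j ω) (k+1)) ∂P = ∫⁻ ω, g (V ω, X k ω) ∂P := by
      simp only [hg, hV, DS_succ, AS_succ, mS_succ, uS, Nat.add_sub_cancel]
    rw [hL0, hL]
    refine lintegral_mono fun ω => ?_
    by_cases hD : DS c h (fun j => X j ω) k = 0
    · simp [hg, hV, hD]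
    have hu := uS_pos_of_DS c _ k hD
    have hu' := uS_pos_of_le c hh _ (Nat.sub_le k 1) hu
    have hD0 := DS_nonneg c (h := h) (fun j => X j ω) k
    have hm0 := mS_pos (fun j => X j ω) k
    simp only [hg, hV, hG]
    set D := DS c h (fun j => X j ω) k
    set m := mS (fun j => X j ω) k
    set a := AS h (fun j => X j ω) k with ha
    set u' := uS c h (fun j => X j ω) (k-1)
    have hu1 : uS c h (fun j => X j ω) k = 1 + c * a := rfl
    rw [hu1] at hu ⊢
    have key := step_one h (1 + c * a) u' (c * h * m) hh hu hu'
      (fun y => F (m / ((1 + c * a) * u') * Real.exp y,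
        a / (1 + c * a) + h * (m / ((1 + c * a) * u') * Real.exp y))) (hF.comp (by fun_prop))
    rw [mul_comm _ (ENNReal.ofReal D)]
    refine le_trans (le_of_eq ?_) (mul_le_mul_right key (ENNReal.ofReal D))
    rw [← lintegral_const_mul']
    swap
    · simp
    congr 1
    ext x
    have hv : 1 + c * (a + h * (m * Real.exp x)) = 1 + c * a + c * h * m * Real.exp x := by ring
    rw [hv, ENNReal.ofReal_mul hD0]
    by_cases hpos : 0 < 1 + c * a + c * h * m * Real.exp x
    · have e1 : Real.exp (x - Real.log ((1 + c * a + c * h * m * Real.exp x) / u'))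
          = Real.exp x * u' / (1 + c * a + c * h * m * Real.exp x) := by
        rw [Real.exp_sub, Real.exp_log (by positivity)]
        field_simp
      rw [e1]
      have e2 : m / ((1 + c * a) * u') * (Real.exp x * u' / (1 + c * a + c * h * m * Real.exp x))
        = m * Real.exp x / ((1 + c * a + c * h * m * Real.exp x) * (1 + c * a)) := by
        field_simp
      have e3 : a / (1 + c * a) + h * (m * Real.exp x / ((1 + c * a + c * h * m * Real.exp x) * (1 + c * a)))
        = (a + h * (m * Real.exp x)) / (1 + c * a + c * h * m * Real.exp x) := by
        have := alg_aux a c (1 + c * a) (1 + c * a + c * h * m * Real.exp x) (h * (m * Real.exp x))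
          hu.ne' hpos.ne' rfl (by ring)
        rw [← this]
        ring
      rw [e2, e3]
      ring
    · simp [rr, hpos]


lemma log_est (z : ℝ) (hz : |z| ≤ 1 / 2) : |Real.log (1 + z) - z| ≤ 2 * z ^ 2 := by
  have h1 := Real.abs_log_sub_add_sum_range_le (x := -z) (by rw [abs_neg]; linarith) 1
  simp only [Finset.sum_range_one, abs_neg, sub_neg_eq_add] at h1
  norm_num at h1
  have h2 : |Real.log (1 + z) - z| = |-z + Real.log (1 + z)| := by congr 1; ring
  rw [h2]
  refine h1.trans ?_
  rw [div_le_iff₀ (by linarith)]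
  nlinarith [sq_nonneg z]

lemma exp_est (x : ℝ) (hx : |x| ≤ 1 / 2) :
    |(1 + Real.exp x) * x - 2 * (Real.exp x - 1)| ≤ 3 * |x| ^ 3 := by
  have h1 := Real.exp_bound (x := x) (by linarith) (n := 3) (by norm_num)
  simp only [Finset.sum_range_succ, Finset.sum_range_zero] at h1
  norm_num [Nat.factorial] at h1
  set ρ := Real.exp x - (1 + x + x ^ 2 / 2) with hρ
  have he : Real.exp x = 1 + x + x ^ 2 / 2 + ρ := by rw [hρ]; ring
  have h3 : (0:ℝ) ≤ |x| ^ 3 := by positivity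
  have h4 : (1 + Real.exp x) * x - 2 * (Real.exp x - 1) = x ^ 3 / 2 + ρ * (x - 2) := by
    rw [he]; ring
  rw [h4]
  have h5 : |x - 2| ≤ 5 / 2 := by
    rw [abs_le] at *; constructor <;> linarith [hx.1, hx.2]
  have h6 : |ρ| ≤ |x| ^ 3 := by linarith
  calc |x ^ 3 / 2 + ρ * (x - 2)| ≤ |x ^ 3 / 2| + |ρ * (x - 2)| := abs_add_le _ _
    _ = |x| ^ 3 / 2 + |ρ| * |x - 2| := by rw [abs_mul, abs_div, abs_pow]; norm_num
    _ ≤ |x| ^ 3 / 2 + |x| ^ 3 * (5 / 2) := by gcongr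
    _ = 3 * |x| ^ 3 := by ring

set_option maxHeartbeats 800000 in
lemma term_est (α x : ℝ) (hα : |α| ≤ 1 / 8) (hx : |x| ≤ 1 / 2) (δ : ℝ)
    (hδ : δ = Real.log (1 + α * Real.exp x) - Real.log (1 - α)) :
    |δ * x - δ ^ 2 / 2 - 2 * α * Real.exp x / (1 + α * Real.exp x) + 2 * α|
      ≤ 100 * (α ^ 2 * |x| + |α| ^ 3 + |α| * |x| ^ 3) := by
  have hE := exp_est x hx
  have he1 : |Real.exp x - 1| ≤ 2 * |x| := Real.abs_exp_sub_one_le (by linarith)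
  have hepos := Real.exp_pos x
  set e := Real.exp x with hedef
  have he2 : e ≤ 2 := by
    have := (abs_le.1 he1).2
    linarith
  have hz : |α * e| ≤ 1 / 4 := by
    rw [abs_mul, abs_of_pos hepos]
    nlinarith [abs_nonneg α]
  have l1 := log_est (α * e) (by linarith)
  have l2 := log_est (-α) (by rw [abs_neg]; linarith)
  set η := δ - α * (1 + e) with hη
  have hα2 : α ^ 2 = |α| ^ 2 := (sq_abs α).symm
  have hηb : |η| ≤ 10 * |α| ^ 2 := by
    have : η = (Real.log (1 + α * e) - α * e) - (Real.log (1 + -α) - -α) := by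
      rw [hη, hδ, sub_eq_add_neg (1:ℝ) α]; ring
    rw [this]
    refine (abs_sub _ _).trans ?_
    have : (α * e) ^ 2 ≤ 4 * |α| ^ 2 := by
      rw [mul_pow, hα2]
      have : e ^ 2 ≤ 4 := by nlinarith
      nlinarith [sq_nonneg (|α|)]
    have h3 : (-α) ^ 2 = |α| ^ 2 := by rw [neg_sq, hα2]
    rw [h3] at l2
    linarith
  have hden : 3 / 4 ≤ 1 + α * e := by have := (abs_le.1 hz).1; linarith
  have hδe : δ = α * (1 + e) + η := by rw [hη]; ring
  have hid : δ * x - δ ^ 2 / 2 - 2 * α * e / (1 + α * e) + 2 * α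
      = α * ((1 + e) * x - 2 * (e - 1)) + η * x + α ^ 2 * ((e - 1) * (3 * e + 1) / 2)
        - 2 * (α * e) ^ 3 / (1 + α * e) - η * (α * (1 + e)) - η ^ 2 / 2 := by
    rw [hδe]
    have : 1 + α * e ≠ 0 := by linarith
    field_simp
    ring
  rw [hid]
  set b := |α| with hb
  set y := |x| with hy
  have hb0 : 0 ≤ b := abs_nonneg _
  have hy0 : 0 ≤ y := abs_nonneg _
  have t1 : |α * ((1 + e) * x - 2 * (e - 1))| ≤ b * (3 * y ^ 3) := by
    rw [abs_mul]; gcongr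
  have t2 : |η * x| ≤ 10 * b ^ 2 * y := by rw [abs_mul]; gcongr
  have t3 : |α ^ 2 * ((e - 1) * (3 * e + 1) / 2)| ≤ b ^ 2 * (2 * y * 7 / 2) := by
    rw [abs_mul, abs_pow, abs_div, abs_mul, abs_of_pos (by positivity : 0 < 3 * e + 1),
      abs_of_pos (by norm_num : (0:ℝ) < 2)]
    gcongr
    linarith
  have t4 : |2 * (α * e) ^ 3 / (1 + α * e)| ≤ 32 * b ^ 3 := by
    rw [abs_div, abs_of_pos (by linarith : 0 < 1 + α * e), div_le_iff₀ (by linarith), abs_mul, abs_pow,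
      abs_mul, abs_of_pos hepos, abs_of_pos (by norm_num : (0:ℝ) < 2)]
    have : (b * e) ^ 3 ≤ (b * 2) ^ 3 := by gcongr
    have : (b * 2) ^ 3 = 8 * b ^ 3 := by ring
    have : 0 ≤ b ^ 3 := by positivity
    nlinarith
  have t5 : |η * (α * (1 + e))| ≤ 10 * b ^ 2 * (b * 3) := by
    rw [abs_mul, abs_mul, abs_of_pos (by positivity : 0 < 1 + e)]
    gcongr
    linarith
  have t6 : |η ^ 2 / 2| ≤ 7 * b ^ 3 := by
    rw [abs_div, abs_pow, abs_of_pos (by norm_num : (0:ℝ) < 2)]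
    have : |η| ^ 2 ≤ (10 * b ^ 2) ^ 2 := by gcongr
    have : (10 * b ^ 2) ^ 2 = 100 * b * b ^ 3 := by ring
    have : 0 ≤ b ^ 3 := by positivity
    nlinarith
  have hby : 0 ≤ b ^ 2 * y := by positivity
  have hby3 : 0 ≤ b * y ^ 3 := by positivity
  have hb3 : 0 ≤ b ^ 3 := by positivity
  rw [hα2]
  clear_value η e b y
  clear hE he1 hedef hz l1 l2 hηb hid hδe hη
  have T1 := abs_le.1 t1
  have T2 := abs_le.1 t2
  have T3 := abs_le.1 t3
  rw [hα2] at T3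
  have T4 := abs_le.1 t4
  have T5 := abs_le.1 t5
  have T6 := abs_le.1 t6
  rw [abs_le]
  constructor
  · linarith [T1.1, T2.1, T3.1, T4.2, T5.2, T6.2]
  · linarith [T1.2, T2.2, T3.2, T4.1, T5.1, T6.1]


/-- exponent increments -/
def eS (c h : ℝ) (x : ℕ → ℝ) (j : ℕ) : ℝ :=
  Real.log (uS c h x (j + 1) / uS c h x (j - 1)) * x j / h
    - Real.log (uS c h x (j + 1) / uS c h x (j - 1)) ^ 2 / (2 * h)

lemma DS_eq (c h : ℝ) (hh : 0 < h) (x : ℕ → ℝ) (n : ℕ) (hn : 0 < uS c h x n) :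
    DS c h x n = Real.exp (∑ j ∈ Finset.range n, eS c h x j
      + (Real.log (uS c h x (n - 1)) - Real.log (uS c h x n)) / 2) := by
  induction n with
  | zero => simp [DS]
  | succ n ih =>
    have h0 := uS_pos_of_le c hh x (Nat.le_succ n) hn
    have h1 := uS_pos_of_le c hh x (Nat.sub_le n 1) h0
    rw [DS_succ, ih h0, Finset.sum_range_succ, rr, if_pos hn]
    have : uS c h x n / uS c h x (n + 1) =
      Real.exp (Real.log (uS c h x n) - Real.log (uS c h x (n+1))) := by
      rw [Real.exp_sub, Real.exp_log h0, Real.exp_log hn]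
    rw [this, ← Real.exp_add, ← Real.exp_add]
    congr 1
    simp only [eS, Nat.add_sub_cancel]
    rw [Real.log_div hn.ne' h1.ne']
    ring

lemma term_bound (c h K U : ℝ) (hh : 0 < h) (hU : 0 < U) (x : ℕ → ℝ) (j : ℕ) (hj : 1 ≤ j)
    (hm : mS x j ≤ K) (hu : U ≤ uS c h x j) (hx : |x j| ≤ 1 / 2) (hsmall : |c| * K / U * h ≤ 1 / 8) :
    |eS c h x j - (2 * c * mS x (j + 1) / uS c h x (j + 1) - 2 * c * mS x j / uS c h x j)|
      ≤ 100 * ((|c| * K / U) + (|c| * K / U) ^ 2 + (|c| * K / U) ^ 3) *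
        (|x j| ^ 3 + h * |x j| + h ^ 2) := by
  obtain ⟨i, rfl⟩ : ∃ i, j = i + 1 := ⟨j - 1, by omega⟩
  have hm0 := mS_pos x (i + 1)
  set m := mS x (i + 1)
  set u := uS c h x (i + 1) with hudef
  set y := x (i + 1)
  have hu0 : 0 < u := lt_of_lt_of_le hU hu
  set α := c * h * m / u with hα
  set C := |c| * K / U with hC
  have hK : 0 < K := lt_of_lt_of_le hm0 hm
  have hC0 : 0 ≤ C := by positivity
  have hαb : |α| ≤ C * h := by
    rw [hα, hC, abs_div, abs_mul, abs_mul, abs_of_pos hh, abs_of_pos hm0, abs_of_pos hu0]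
    calc |c| * h * m / u ≤ |c| * h * K / U := by gcongr
      _ = _ := by ring
  have hα8 : |α| ≤ 1 / 8 := hαb.trans hsmall
  have hsucc : uS c h x (i + 1 + 1) = u * (1 + α * Real.exp y) := by
    rw [uS_succ, hα]; field_simp; rfl
  have hprev : uS c h x (i + 1 - 1) = u * (1 - α) := by
    have : u = uS c h x i + c * h * m := by
      rw [hudef, uS_succ]; simp only [m, mS_succ]; ring
    rw [Nat.add_sub_cancel, hα]; field_simp; linarith
  have hα1 := abs_le.1 hα8
  have hey : |α * Real.exp y| ≤ 1/2 := by
    have he1 : |Real.exp y - 1| ≤ 2 * |y| := Real.abs_exp_sub_one_le (by linarith)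
    have := (abs_le.1 he1).2
    rw [abs_mul, abs_of_pos (Real.exp_pos y)]
    nlinarith [abs_nonneg α, Real.exp_pos y]
  have hp1 : 0 < 1 + α * Real.exp y := by linarith [(abs_le.1 hey).1]
  have hp2 : 0 < 1 - α := by linarith
  set δ := Real.log (1 + α * Real.exp y) - Real.log (1 - α) with hδ
  have hlog : Real.log (uS c h x (i + 1 + 1) / uS c h x (i + 1 - 1)) = δ := by
    rw [hsucc, hprev, mul_div_mul_left _ _ hu0.ne', Real.log_div hp1.ne' hp2.ne']
  have key := term_est α y hα8 hx δ hδ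
  have heq : eS c h x (i + 1) - (2 * c * mS x (i + 1 + 1) / uS c h x (i + 1 + 1) - 2 * c * m / u)
      = (δ * y - δ ^ 2 / 2 - 2 * α * Real.exp y / (1 + α * Real.exp y) + 2 * α) / h := by
    unfold eS
    rw [hlog, hsucc, mS_succ]
    have e1 : 2 * c * m / u = 2 * α / h := by rw [hα]; field_simp
    have e2 : 2 * c * (mS x (i + 1) * Real.exp (x (i + 1))) / (u * (1 + α * Real.exp y))
        = (2 * α * Real.exp y / (1 + α * Real.exp y)) / h := by
      rw [hα] at hp1 ⊢
      field_simp
      rfl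
    rw [e1, e2]
    field_simp
    ring
  rw [heq, abs_div, abs_of_pos hh, div_le_iff₀ hh]
  refine key.trans ?_
  have hy0 := abs_nonneg y
  have q1 : α ^ 2 * |y| ≤ C ^ 2 * h ^ 2 * |y| := by
    rw [← sq_abs α, ← mul_pow]; gcongr
  have q2 : |α| ^ 3 ≤ C ^ 3 * h ^ 3 := by rw [← mul_pow]; gcongr
  have q3 : |α| * |y| ^ 3 ≤ C * h * |y| ^ 3 := by gcongr
  calc 100 * (α ^ 2 * |y| + |α| ^ 3 + |α| * |y| ^ 3)
      ≤ 100 * (C ^ 2 * h ^ 2 * |y| + C ^ 3 * h ^ 3 + C * h * |y| ^ 3) := by gcongr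
    _ ≤ 100 * ((C + C^2 + C^3) * (|y| ^ 3 + h * |y| + h ^ 2) * h) := by
        gcongr
        have a1 : 0 ≤ C * (h * (h * |y| + h ^ 2)) := by positivity
        have a2 : 0 ≤ C ^ 2 * (h * (|y| ^ 3 + h ^ 2)) := by positivity
        have a3 : 0 ≤ C ^ 3 * (h * (|y| ^ 3 + h * |y|)) := by positivity
        nlinarith
    _ = _ := by ring

lemma term_zero_bound (c h K U : ℝ) (hh : 0 < h) (hU : 0 < U) (hU1 : U ≤ 1) (x : ℕ → ℝ)
    (hK1 : 1 ≤ K) (hu : U ≤ uS c h x 1) (hx : |x 0| ≤ 1 / 2) (hsmall : |c| * K / U * h ≤ 1 / 8) :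
    |eS c h x 0 - (2 * c * mS x 1 / uS c h x 1 - 2 * c * mS x 0 / uS c h x 0)|
      ≤ (12 * |c| / U) * |x 0| + (8 * c ^ 2 + 4 * c ^ 2 / U) * h := by
  have hc0 := abs_nonneg c
  have hch : |c| * h ≤ 1 / 8 := by
    refine le_trans ?_ hsmall
    gcongr
    rw [le_div_iff₀ hU]
    gcongr
    linarith
  set y := x 0
  have he1 : |Real.exp y - 1| ≤ 2 * |y| := Real.abs_exp_sub_one_le (by linarith)
  have hepos := Real.exp_pos y
  set e := Real.exp y with he
  have he2 : e ≤ 2 := by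
    have := (abs_le.1 he1).2
    linarith
  have hu1 : uS c h x 1 = 1 + c * h * e := by
    have := uS_succ c h x 0
    rw [zero_add, uS_zero, mS_zero] at this
    rw [this]; simp [e, y]
  have hm1 : mS x 1 = e := by
    have := mS_succ x 0
    rw [zero_add, mS_zero] at this
    rw [this]; simp [e, y]
  set z := c * h * e with hz
  have hzb : |z| ≤ 2 * (|c| * h) := by
    rw [hz, abs_mul, abs_mul, abs_of_pos hh, abs_of_pos hepos]
    nlinarith [mul_nonneg hc0 hh.le]
  have hl := log_est z (by linarith)
  set δ := Real.log (1 + z) with hδ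
  have hδb : |δ| ≤ 4 * (|c| * h) := by
    have h1 : |δ| ≤ |δ - z| + |z| := by simpa using abs_add_le (δ - z) z
    have : z ^ 2 ≤ |z| * (1/4) := by
      rw [← sq_abs, sq]; gcongr; linarith
    linarith [mul_nonneg hc0 hh.le]
  have hu0 : 0 < 1 + z := by rw [← hu1]; linarith
  have hUz : U ≤ 1 + z := by rw [← hu1]; exact hu
  have heq : eS c h x 0 - (2 * c * mS x 1 / uS c h x 1 - 2 * c * mS x 0 / uS c h x 0)
      = δ * y / h - δ ^ 2 / (2 * h) - 2 * c * (e - 1) / (1 + z) + 2 * c * z / (1 + z) := by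
    unfold eS
    simp only [zero_add, Nat.zero_sub, uS_zero, mS_zero, hm1, hu1, div_one]
    have : Real.log (1 + z) = δ := rfl
    rw [this]
    field_simp
    ring
  rw [heq]
  have t1 : |δ * y / h| ≤ 4 * |c| * |y| := by
    rw [abs_div, abs_mul, abs_of_pos hh, div_le_iff₀ hh]
    calc |δ| * |y| ≤ 4 * (|c| * h) * |y| := by gcongr
      _ = _ := by ring
  have t2 : |δ ^ 2 / (2 * h)| ≤ 8 * c ^ 2 * h := by
    rw [abs_div, abs_pow, abs_of_pos (by positivity : 0 < 2 * h), div_le_iff₀ (by positivity)]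
    calc |δ| ^ 2 ≤ (4 * (|c| * h)) ^ 2 := by gcongr
      _ = 16 * |c| ^ 2 * h ^ 2 := by ring
      _ = 8 * c ^ 2 * h * (2 * h) := by rw [sq_abs]; ring
  have t3 : |2 * c * (e - 1) / (1 + z)| ≤ 4 * |c| / U * |y| := by
    rw [abs_div, abs_mul, abs_mul, abs_of_pos hu0, abs_two]
    calc 2 * |c| * |e - 1| / (1 + z) ≤ 2 * |c| * (2 * |y|) / U := by gcongr
      _ = _ := by ring
  have t4 : |2 * c * z / (1 + z)| ≤ 4 * c ^ 2 / U * h := by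
    rw [abs_div, abs_mul, abs_mul, abs_of_pos hu0, abs_two]
    calc 2 * |c| * |z| / (1 + z) ≤ 2 * |c| * (2 * (|c| * h)) / U := by gcongr
      _ = 4 * |c| ^ 2 / U * h := by ring
      _ = _ := by rw [sq_abs]
  have t5 : 4 * |c| * |y| ≤ 4 * |c| / U * |y| := by
    gcongr
    rw [le_div_iff₀ hU]
    nlinarith
  have t6 : 12 * |c| / U * |y| = 3 * (4 * |c| / U * |y|) := by ring
  have t7 : 0 ≤ 4 * |c| / U * |y| := by positivity
  rw [t6]
  rw [abs_le] at *
  constructor <;> linarith [t1.1, t1.2, t2.1, t2.2, t3.1, t3.2, t4.1, t4.2]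

lemma sum_bound (c h K U : ℝ) (hh : 0 < h) (hU : 0 < U) (hU1 : U ≤ 1) (x : ℕ → ℝ) (n : ℕ) (hn : 1 ≤ n)
    (hK1 : 1 ≤ K) (hm : ∀ k ≤ n, mS x k ≤ K) (hu : ∀ k ≤ n, U ≤ uS c h x k)
    (hx : ∀ j < n, |x j| ≤ 1 / 2) (hsmall : |c| * K / U * h ≤ 1 / 8) :
    |∑ j ∈ Finset.range n, eS c h x j - (2 * c * mS x n / uS c h x n - 2 * c)|
      ≤ (12 * |c| / U) * |x 0| + (8 * c ^ 2 + 4 * c ^ 2 / U) * h +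
       100 * ((|c| * K / U) + (|c| * K / U) ^ 2 + (|c| * K / U) ^ 3) *
        (∑ j ∈ Finset.range n, (|x j| ^ 3 + h * |x j|) + n * h * h) := by
  have hC : 0 ≤ |c| * K / U := by positivity
  set R := 100 * ((|c| * K / U) + (|c| * K / U) ^ 2 + (|c| * K / U) ^ 3) with hR
  have hR0 : 0 ≤ R := by positivity
  have htel : 2 * c * mS x n / uS c h x n - 2 * c = ∑ j ∈ Finset.range n,
      (2 * c * mS x (j+1) / uS c h x (j+1) - 2 * c * mS x j / uS c h x j) := by
    rw [Finset.sum_range_sub (fun j => 2 * c * mS x j / uS c h x j)]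
    simp [mS_zero, uS_zero]
  rw [htel, ← Finset.sum_sub_distrib]
  refine (Finset.abs_sum_le_sum_abs _ _).trans ?_
  obtain ⟨k, rfl⟩ : ∃ k, n = k + 1 := ⟨n - 1, by omega⟩
  have hs : ∑ j ∈ Finset.range (k+1), (|x j| ^ 3 + h * |x j|) + ((k+1 : ℕ) : ℝ) * h * h
      = ∑ j ∈ Finset.range (k+1), (|x j| ^ 3 + h * |x j| + h ^ 2) := by
    rw [Finset.sum_add_distrib (g := fun _ => h ^ 2)]
    simp
    ring
  rw [hs, Finset.sum_range_succ', Finset.sum_range_succ', mul_add, Finset.mul_sum]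
  have h0 := term_zero_bound c h K U hh hU hU1 x hK1 (hu 1 hn) (hx 0 (by omega)) hsmall
  have h1 : ∑ j ∈ Finset.range k, |eS c h x (j+1) - (2 * c * mS x (j+1+1) / uS c h x (j+1+1) -
      2 * c * mS x (j+1) / uS c h x (j+1))| ≤ ∑ j ∈ Finset.range k,
      R * (|x (j+1)| ^ 3 + h * |x (j+1)| + h ^ 2) := by
    refine Finset.sum_le_sum fun j hj => ?_
    have := Finset.mem_range.1 hj
    exact term_bound c h K U hh hU x (j+1) (by omega) (hm _ (by omega)) (hu _ (by omega))
      (hx _ (by omega)) hsmall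
  have h2 : 0 ≤ R * (|x 0| ^ 3 + h * |x 0| + h ^ 2) := by positivity
  simp only [zero_add] at *
  linarith


open Filter Topology

/-- path increments on the grid of mesh `h` -/
def xP (φ : ℝ → ℝ) (h : ℝ) (j : ℕ) : ℝ := φ (((j + 1 : ℕ) : ℝ) * h) - φ ((j : ℝ) * h)

lemma mS_xP (φ : ℝ → ℝ) (h0 : φ 0 = 0) (h : ℝ) (k : ℕ) :
    mS (xP φ h) k = Real.exp (φ ((k : ℝ) * h)) := by
  unfold mS xP
  rw [Finset.sum_range_sub (fun j => φ ((j : ℝ) * h))]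
  simp [h0]

lemma unif_cont (φ : ℝ → ℝ) (hφ : Continuous φ) (t : ℝ) (N : ℕ → ℕ)
    (hN : Tendsto N atTop atTop) (ht : 0 < t) (ε : ℝ) (hε : 0 < ε) :
    ∀ᶠ i in atTop, ∀ j < N i, ∀ s ∈ Icc ((j : ℝ) * (t / N i)) (((j + 1 : ℕ) : ℝ) * (t / N i)),
      |φ (((j + 1 : ℕ) : ℝ) * (t / N i)) - φ s| ≤ ε := by
  have hu : UniformContinuousOn φ (Icc 0 t) :=
    isCompact_Icc.uniformContinuousOn_of_continuous hφ.continuousOn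
  rw [Metric.uniformContinuousOn_iff] at hu
  obtain ⟨d, hd, hd2⟩ := hu ε hε
  have hlim : Tendsto (fun i => t / (N i : ℝ)) atTop (𝓝 0) :=
    (tendsto_const_div_atTop_nhds_zero_nat t).comp hN
  filter_upwards [hlim.eventually (gt_mem_nhds hd), hN.eventually (eventually_ge_atTop 1)] with i hi h1 j hj s hs
  have hNpos : (0:ℝ) < N i := by exact_mod_cast h1
  have hh : 0 < t / N i := by positivity
  have hj1 : ((j + 1 : ℕ) : ℝ) ≤ N i := by exact_mod_cast hj
  have hj2 : ((j + 1 : ℕ) : ℝ) * (t / N i) ≤ t := by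
    calc ((j + 1 : ℕ) : ℝ) * (t / N i) ≤ N i * (t / N i) := by gcongr
      _ = t := by field_simp
  have hj0 : 0 ≤ (j : ℝ) * (t / N i) := by positivity
  have hdiff : ((j + 1 : ℕ) : ℝ) * (t / N i) = (j : ℝ) * (t / N i) + t / N i := by push_cast; ring
  have := hd2 (((j + 1 : ℕ) : ℝ) * (t / N i)) ⟨by positivity, hj2⟩ s
    ⟨hj0.trans hs.1, hs.2.trans hj2⟩ (by
      rw [Real.dist_eq, abs_of_nonneg (by linarith [hs.2])]
      linarith [hs.1])
  rw [Real.dist_eq] at this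
  exact this.le

lemma AS_tendsto (φ : ℝ → ℝ) (hφ : Continuous φ) (h0 : φ 0 = 0) (t : ℝ) (ht : 0 < t) (N : ℕ → ℕ)
    (hN : Tendsto N atTop atTop) :
    Tendsto (fun i => AS (t / N i) (xP φ (t / N i)) (N i)) atTop
      (𝓝 (∫ s in (0:ℝ)..t, Real.exp (φ s))) := by
  have hf : Continuous fun s => Real.exp (φ s) := Real.continuous_exp.comp hφ
  rw [Metric.tendsto_nhds]
  intro ε hε
  filter_upwards [unif_cont _ hf t N hN ht (ε / (2 * t)) (by positivity),
    hN.eventually (eventually_ge_atTop 1)] with i hi h1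
  have hNpos : (0:ℝ) < N i := by exact_mod_cast h1
  set h := t / (N i : ℝ) with hh
  have hh0 : 0 < h := by positivity
  have hIIf : ∀ a b : ℝ, IntervalIntegrable (fun s => Real.exp (φ s)) volume a b :=
    fun a b => hf.intervalIntegrable a b
  have hsum := intervalIntegral.sum_integral_adjacent_intervals (μ := volume)
    (f := fun s => Real.exp (φ s)) (a := fun j : ℕ => (j : ℝ) * h) (n := N i)
    (fun k _ => hIIf _ _)
  have hend : ((N i : ℕ) : ℝ) * h = t := by rw [hh]; field_simp
  simp only [Nat.cast_zero, zero_mul, hend] at hsum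
  rw [Real.dist_eq, ← hsum, AS, ← Finset.sum_sub_distrib]
  refine lt_of_le_of_lt (Finset.abs_sum_le_sum_abs _ _) ?_
  have hterm : ∀ j ∈ Finset.range (N i), |h * mS (xP φ h) (j + 1) -
      ∫ s in (j : ℝ) * h..((j + 1 : ℕ) : ℝ) * h, Real.exp (φ s)| ≤ ε / (2 * t) * h := by
    intro j hj
    have hdiff : ((j + 1 : ℕ) : ℝ) * h - (j : ℝ) * h = h := by push_cast; ring
    have e1 : h * mS (xP φ h) (j + 1) = ∫ s in (j : ℝ) * h..((j + 1 : ℕ) : ℝ) * h,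
        Real.exp (φ (((j + 1 : ℕ) : ℝ) * h)) := by
      rw [intervalIntegral.integral_const, hdiff, mS_xP φ h0, smul_eq_mul]
    rw [e1, ← intervalIntegral.integral_sub (by simp) (hIIf _ _)]
    have := intervalIntegral.norm_integral_le_of_norm_le_const (a := (j : ℝ) * h)
      (b := ((j + 1 : ℕ) : ℝ) * h) (C := ε / (2 * t))
      (f := fun s => Real.exp (φ (((j + 1 : ℕ) : ℝ) * h)) - Real.exp (φ s)) (by
        intro s hs
        rw [uIoc_of_le (by linarith)] at hs
        exact hi j (Finset.mem_range.1 hj) s ⟨hs.1.le, hs.2⟩)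
    rw [hdiff, abs_of_pos hh0] at this
    exact this
  refine lt_of_le_of_lt (Finset.sum_le_sum hterm) ?_
  rw [Finset.sum_const, Finset.card_range, nsmul_eq_mul]
  have : (N i : ℝ) * (ε / (2 * t) * h) = ε / 2 := by
    rw [hh]; field_simp
  rw [this]; linarith

lemma DS_tendsto (φ : ℝ → ℝ) (hφ : Continuous φ) (h0 : φ 0 = 0) (t : ℝ) (ht : 0 < t) (c : ℝ)
    (hpos : 0 < 1 + c * ∫ s in (0:ℝ)..t, Real.exp (φ s)) (N : ℕ → ℕ)
    (hN : Tendsto N atTop atTop)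
    (hX : Tendsto (fun i => ∑ j ∈ Finset.range (N i),
      (|xP φ (t / N i) j| ^ 3 + (t / N i) * |xP φ (t / N i) j|)) atTop (𝓝 0)) :
    Tendsto (fun i => DS c (t / N i) (xP φ (t / N i)) (N i)) atTop
      (𝓝 (Real.exp (2 * c * Real.exp (φ t) / (1 + c * ∫ s in (0:ℝ)..t, Real.exp (φ s)) - 2 * c))) := by
  set a := ∫ s in (0:ℝ)..t, Real.exp (φ s) with ha
  have hA := AS_tendsto φ hφ h0 t ht N hN
  have hlim : Tendsto (fun i => t / (N i : ℝ)) atTop (𝓝 0) :=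
    (tendsto_const_div_atTop_nhds_zero_nat t).comp hN
  have hN1 := hN.eventually (eventually_ge_atTop 1)
  have hu : Tendsto (fun i => uS c (t / N i) (xP φ (t / N i)) (N i)) atTop (𝓝 (1 + c * a)) :=
    (hA.const_mul c).const_add 1
  have hmN : ∀ᶠ i in atTop, mS (xP φ (t / N i)) (N i) = Real.exp (φ t) := by
    filter_upwards [hN1] with i hi
    have hNpos : (0:ℝ) < N i := by exact_mod_cast hi
    rw [mS_xP φ h0]; congr 2; field_simp
  have hu' : Tendsto (fun i => uS c (t / N i) (xP φ (t / N i)) (N i - 1)) atTop (𝓝 (1 + c * a)) := by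
    have h1 : Tendsto (fun i => uS c (t / N i) (xP φ (t / N i)) (N i) - c * (t / N i) * Real.exp (φ t))
        atTop (𝓝 (1 + c * a - c * 0 * Real.exp (φ t))) :=
      hu.sub ((hlim.const_mul c).mul_const _)
    rw [mul_zero, zero_mul, sub_zero] at h1
    refine h1.congr' ?_
    filter_upwards [hN1, hmN] with i hi hm
    obtain ⟨k, hk⟩ : ∃ k, N i = k + 1 := ⟨N i - 1, by omega⟩
    rw [← hm]
    have : uS c (t / N i) (xP φ (t / N i)) (k + 1) = uS c (t / N i) (xP φ (t / N i)) k +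
        c * (t / N i) * mS (xP φ (t / N i)) (k + 1) := by
      rw [uS_succ, mS_succ]; ring
    have hk1 : N i - 1 = k := by omega
    rw [hk1, hk] at *
    rw [this]; ring
  -- constants
  obtain ⟨K0, hK0⟩ := (isCompact_Icc (a := (0:ℝ)) (b := t)).exists_bound_of_continuousOn
    (f := fun s => Real.exp (φ s)) (Real.continuous_exp.comp hφ).continuousOn
  set K := max K0 1
  set U := min 1 ((1 + c * a) / 2)
  have hU : 0 < U := lt_min one_pos (by linarith)
  have hU1 : U ≤ 1 := min_le_left _ _
  have hUlt : U < 1 + c * a := lt_of_le_of_lt (min_le_right _ _) (by linarith)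
  set R := 100 * ((|c| * K / U) + (|c| * K / U) ^ 2 + (|c| * K / U) ^ 3)
  -- x 0 tends to zero
  have hx0 : Tendsto (fun i => |xP φ (t / N i) 0|) atTop (𝓝 0) := by
    have h1 : Tendsto (fun i => |φ (t / N i)|) atTop (𝓝 |φ 0|) :=
      ((hφ.tendsto 0).comp hlim).abs
    rw [h0, abs_zero] at h1
    refine h1.congr fun i => ?_
    simp [xP, h0]
  have hexp : Tendsto (fun i => ∑ j ∈ Finset.range (N i), eS c (t / N i) (xP φ (t / N i)) j) atTop
      (𝓝 (2 * c * Real.exp (φ t) / (1 + c * a) - 2 * c)) := by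
    have hg : Tendsto (fun i => 2 * c * Real.exp (φ t) / uS c (t / N i) (xP φ (t / N i)) (N i) - 2 * c)
        atTop (𝓝 (2 * c * Real.exp (φ t) / (1 + c * a) - 2 * c)) :=
      (tendsto_const_nhds.div hu hpos.ne').sub_const _
    have hdiff : Tendsto (fun i => ∑ j ∈ Finset.range (N i), eS c (t / N i) (xP φ (t / N i)) j -
        (2 * c * Real.exp (φ t) / uS c (t / N i) (xP φ (t / N i)) (N i) - 2 * c)) atTop (𝓝 0) := by
      have hb : Tendsto (fun i => (12 * |c| / U) * |xP φ (t / N i) 0| +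
          (8 * c ^ 2 + 4 * c ^ 2 / U) * (t / N i) +
          R * (∑ j ∈ Finset.range (N i), (|xP φ (t / N i) j| ^ 3 + (t / N i) * |xP φ (t / N i) j|)
            + t * (t / N i))) atTop (𝓝 ((12 * |c| / U) * 0 + (8 * c ^ 2 + 4 * c ^ 2 / U) * 0 +
            R * (0 + t * 0))) :=
        ((hx0.const_mul _).add (hlim.const_mul _)).add ((hX.add (hlim.const_mul _)).const_mul _)
      simp only [mul_zero, add_zero] at hb
      have hsm : Tendsto (fun i => |c| * K / U * (t / N i)) atTop (𝓝 (|c| * K / U * 0)) :=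
        hlim.const_mul _
      rw [mul_zero] at hsm
      refine squeeze_zero_norm' ?_ hb
      filter_upwards [hN1, hmN, unif_cont φ hφ t N hN ht (1/2) (by norm_num),
        hu.eventually (lt_mem_nhds hUlt), hsm.eventually (gt_mem_nhds (by norm_num : (0:ℝ) < 1/8))]
        with i hi hm hx hui hsmi
      have hNpos : (0:ℝ) < N i := by exact_mod_cast hi
      have hh : 0 < t / N i := by positivity
      have := sum_bound c (t / N i) K U hh hU hU1 (xP φ (t / N i)) (N i) hi (le_max_right _ _)
        (by
          intro k hk
          rw [mS_xP φ h0]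
          have hkN : (k : ℝ) ≤ N i := by exact_mod_cast hk
          have := hK0 ((k:ℝ) * (t / N i)) ⟨by positivity, by
            calc (k:ℝ) * (t / N i) ≤ N i * (t / N i) := by gcongr
              _ = t := by field_simp⟩
          rw [Real.norm_eq_abs, abs_of_pos (Real.exp_pos _)] at this
          exact this.trans (le_max_left _ _))
        (by
          intro k hk
          rcases le_total 0 c with hc | hc
          · refine hU1.trans ?_
            have := AS_nonneg hh (xP φ (t / N i)) k
            unfold uS
            nlinarith
          · refine hui.le.trans ?_
            have := AS_mono hh (xP φ (t / N i)) hk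
            unfold uS
            nlinarith)
        (by
          intro j hj
          exact hx j hj ((j:ℝ) * (t / N i)) ⟨le_rfl, by push_cast; nlinarith⟩)
        hsmi.le
      rw [hm] at this
      have e : (N i : ℝ) * (t / N i) = t := by field_simp
      rw [e] at this
      exact this
    have := hdiff.add hg
    simp only [sub_add_cancel, zero_add] at this
    exact this
  have hlog : Tendsto (fun i => (Real.log (uS c (t / N i) (xP φ (t / N i)) (N i - 1)) -
      Real.log (uS c (t / N i) (xP φ (t / N i)) (N i))) / 2) atTop (𝓝 0) := by
    have := ((hu'.log hpos.ne').sub (hu.log hpos.ne')).div_const 2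
    simpa using this
  have hfin := (Real.continuous_exp.tendsto _).comp (hexp.add hlog)
  rw [add_zero] at hfin
  refine hfin.congr' ?_
  filter_upwards [hN1, hu.eventually (lt_mem_nhds hpos)] with i hi hui
  have hNpos : (0:ℝ) < N i := by exact_mod_cast hi
  rw [DS_eq c (t / N i) (by positivity) _ _ hui]
  rfl


lemma gauss_const_finite (b : ℝ) :
    ∫⁻ z, ENNReal.ofReal ((|z| + b) ^ 3 + (|z| + b)) ∂(gaussianReal 0 1) ≠ ⊤ := by
  have h3 : MemLp (fun z : ℝ => |z| + b) (3 : ℕ) (gaussianReal 0 1) := by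
    have h1 : MemLp (id : ℝ → ℝ) (3 : ℕ) (gaussianReal 0 1) := memLp_id_gaussianReal' _ (by simp)
    exact h1.abs.add (memLp_const b)
  have h1 : Integrable (fun z : ℝ => |z| + b) (gaussianReal 0 1) :=
    h3.integrable (by norm_num)
  have h2 : Integrable (fun z : ℝ => (|z| + b) ^ 3) (gaussianReal 0 1) := by
    have := h3.integrable_norm_pow (by norm_num)
    refine this.mono (by fun_prop) (Filter.Eventually.of_forall fun z => ?_)
    simp
  exact (h2.add h1).lintegral_lt_top.ne

lemma gauss_moment (t h : ℝ) (hh : 0 < h) (hht : h ≤ t) :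
    ∫⁻ x, ENNReal.ofReal (|x| ^ 3 + h * |x|) ∂(gaussianReal (-h/2) (Real.toNNReal h)) ≤
    ENNReal.ofReal (h * √h) *
      ∫⁻ z, ENNReal.ofReal ((|z| + √t) ^ 3 + (|z| + √t)) ∂(gaussianReal 0 1) := by
  have hmap : gaussianReal (-h/2) (Real.toNNReal h)
      = (gaussianReal 0 1).map (fun z => √h * z + (-h/2)) := by
    have e1 := gaussianReal_map_const_mul (μ := 0) (v := 1) (√h)
    have e2 := gaussianReal_map_add_const (μ := √h * 0) (v := NNReal.mk (√h ^ 2) (sq_nonneg _) * 1) (-h/2)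
    rw [← e1, Measure.map_map (by fun_prop) (by fun_prop)] at e2
    have : (fun x => x + -h / 2) ∘ (fun x => √h * x) = fun z => √h * z + (-h/2) := rfl
    rw [this] at e2
    rw [e2]
    congr 1
    · ring
    · ext
      simp [Real.sq_sqrt hh.le, hh.le]
  rw [hmap, lintegral_map (by fun_prop) (by fun_prop), ← lintegral_const_mul' _ _ (by simp)]
  refine lintegral_mono fun z => ?_
  rw [← ENNReal.ofReal_mul (by positivity)]
  apply ENNReal.ofReal_le_ofReal
  have hs0 : 0 < √h := Real.sqrt_pos.2 hh
  have hst : √h ≤ √t := Real.sqrt_le_sqrt hht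
  have hs2 : h = √h ^ 2 := (Real.sq_sqrt hh.le).symm
  have hb : |√h * z + (-h/2)| ≤ √h * (|z| + √t) := by
    refine (abs_add_le _ _).trans ?_
    rw [abs_mul, abs_of_pos hs0, abs_of_neg (by linarith : -h/2 < 0)]
    nlinarith
  have hc : |√h * z + (-h/2)| ^ 3 ≤ (√h * (|z| + √t)) ^ 3 := by gcongr
  have hd : h * |√h * z + (-h/2)| ≤ h * (√h * (|z| + √t)) := by gcongr
  have he : h * √h = √h ^ 3 := by nth_rewrite 1 [hs2]; ring
  calc _ ≤ (√h * (|z| + √t)) ^ 3 + h * (√h * (|z| + √t)) := add_le_add hc hd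
    _ = √h ^ 3 * (|z| + √t) ^ 3 + h * √h * (|z| + √t) := by ring
    _ = _ := by rw [he]; ring

section BM
variable {Ω : Type*} [MeasurableSpace Ω] {P : Measure Ω} {B : ℝ → Ω → ℝ}

/-- the drifted path -/
def pth (B : ℝ → Ω → ℝ) (ω : Ω) (s : ℝ) : ℝ := B s ω - s / 2

lemma pth_cont (hB : IsBrownianMotion P B) (ω : Ω) : Continuous (pth B ω) := by
  have := hB.continuous_paths ω
  unfold pth
  fun_prop

lemma pth_zero (hB : IsBrownianMotion P B) (ω : Ω) : pth B ω 0 = 0 := by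
  simp [pth, hB.start]

lemma xP_pth (h : ℝ) (ω : Ω) (j : ℕ) : xP (pth B ω) h j =
    (B (((j + 1 : ℕ) : ℝ) * h) ω - B ((j : ℝ) * h) ω) - h / 2 := by
  simp only [xP, pth]; push_cast; ring

lemma meas_xP (hB : IsBrownianMotion P B) (h : ℝ) (j : ℕ) :
    Measurable fun ω => xP (pth B ω) h j := by
  simp only [xP_pth]
  exact ((hB.measurable _).sub (hB.measurable _)).sub_const _

lemma law_xP (hB : IsBrownianMotion P B) (h : ℝ) (hh : 0 < h) (j : ℕ) :
    P.map (fun ω => xP (pth B ω) h j) = gaussianReal (-h/2) (Real.toNNReal h) := by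
  have h1 := hB.gaussian_increments ((j : ℝ) * h) (((j + 1 : ℕ) : ℝ) * h) (by positivity)
    (by push_cast; nlinarith)
  have h2 : ((j + 1 : ℕ) : ℝ) * h - (j : ℝ) * h = h := by push_cast; ring
  rw [h2] at h1
  simp only [xP_pth]
  have h3 := gaussianReal_map_sub_const (μ := 0) (v := Real.toNNReal h) (h/2)
  rw [← h1, Measure.map_map (by fun_prop) (by exact (hB.measurable _).sub (hB.measurable _) :
    Measurable fun ω => B (((j + 1 : ℕ) : ℝ) * h) ω - B ((j : ℝ) * h) ω)] at h3
  have e : (0 - h / 2) = -h/2 := by ring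
  rw [e] at h3
  exact h3

lemma indep_xP (hB : IsBrownianMotion P B) (h : ℝ) (hh : 0 < h) :
    iIndepFun (fun j ω => xP (pth B ω) h j) P := by
  have h1 := hB.indep_increments (fun j => (j : ℝ) * h) (fun i j hij => by
    have : (i : ℝ) ≤ j := by exact_mod_cast hij
    show (i : ℝ) * h ≤ j * h
    gcongr) (by simp)
  have h2 := h1.comp (fun _ y => y - h / 2) (fun _ => by fun_prop)
  have : (fun j ω => xP (pth B ω) h j) = fun (j : ℕ) => (fun y => y - h / 2) ∘
    fun ω => B (((j + 1 : ℕ) : ℝ) * h) ω - B ((j : ℝ) * h) ω := by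
    ext j ω
    rw [xP_pth]; rfl
  rw [this]
  exact h2

lemma ae_small (hB : IsBrownianMotion P B) (t : ℝ) (ht : 0 < t) :
    ∀ᵐ ω ∂P, Tendsto (fun i : ℕ => ∑ j ∈ Finset.range (4 ^ i),
      (|xP (pth B ω) (t / (4 ^ i : ℕ)) j| ^ 3 + (t / (4 ^ i : ℕ)) * |xP (pth B ω) (t / (4 ^ i : ℕ)) j|))
      atTop (𝓝 0) := by
  set X : ℕ → Ω → ℝ := fun i ω => ∑ j ∈ Finset.range (4 ^ i),
      (|xP (pth B ω) (t / (4 ^ i : ℕ)) j| ^ 3 + (t / (4 ^ i : ℕ)) * |xP (pth B ω) (t / (4 ^ i : ℕ)) j|)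
    with hX
  have hXm : ∀ i, Measurable (X i) := by
    intro i
    refine Finset.measurable_sum _ fun j _ => ?_
    have := meas_xP hB (t / (4 ^ i : ℕ)) j
    fun_prop
  have hX0 : ∀ i ω, 0 ≤ X i ω := fun i ω => Finset.sum_nonneg fun j _ => by positivity
  set C := ∫⁻ z, ENNReal.ofReal ((|z| + √t) ^ 3 + (|z| + √t)) ∂(gaussianReal 0 1) with hC
  have hE : ∀ i, ∫⁻ ω, ENNReal.ofReal (X i ω) ∂P ≤ ENNReal.ofReal (t * √t) * C * 2⁻¹ ^ i := by
    intro i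
    set h := t / ((4 ^ i : ℕ) : ℝ) with hh
    have h4 : (0:ℝ) < ((4 ^ i : ℕ) : ℝ) := by positivity
    have hh0 : 0 < h := by positivity
    have hht : h ≤ t := div_le_self ht.le (by exact_mod_cast Nat.one_le_pow _ _ (by norm_num))
    have e1 : ∀ ω, ENNReal.ofReal (X i ω) = ∑ j ∈ Finset.range (4 ^ i),
        ENNReal.ofReal (|xP (pth B ω) h j| ^ 3 + h * |xP (pth B ω) h j|) := by
      intro ω
      exact ENNReal.ofReal_sum_of_nonneg fun j _ => by positivity
    simp only [e1]
    rw [lintegral_finsetSum' _ (fun j _ => by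
      have := meas_xP hB h j
      fun_prop)]
    have e2 : ∀ j ∈ Finset.range (4 ^ i), ∫⁻ ω, ENNReal.ofReal (|xP (pth B ω) h j| ^ 3 +
        h * |xP (pth B ω) h j|) ∂P ≤ ENNReal.ofReal (h * √h) * C := by
      intro j _
      have := gauss_moment t h hh0 hht
      rw [← law_xP hB h hh0 j, lintegral_map (by fun_prop) (meas_xP hB h j)] at this
      exact this
    refine (Finset.sum_le_sum e2).trans ?_
    rw [Finset.sum_const, Finset.card_range, nsmul_eq_mul]
    have hsq : √h = √t * (2⁻¹) ^ i := by
      rw [hh, Real.sqrt_div ht.le]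
      have : ((4 ^ i : ℕ) : ℝ) = (2 ^ i) ^ 2 := by
        push_cast
        rw [← pow_mul, mul_comm, pow_mul]; norm_num
      rw [this, Real.sqrt_sq (by positivity), inv_pow]
      rfl
    have e3 : ENNReal.ofReal (t * √t) * C * 2⁻¹ ^ i = ENNReal.ofReal (t * √t * 2⁻¹ ^ i) * C := by
      rw [ENNReal.ofReal_mul (p := t * √t) (q := 2⁻¹ ^ i) (by positivity), ENNReal.ofReal_pow (by positivity),
        ENNReal.ofReal_inv_of_pos (by norm_num)]
      simp only [ENNReal.ofReal_ofNat]
      ring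
    have e4 : ((4 ^ i : ℕ) : ENNReal) = ENNReal.ofReal ((4 ^ i : ℕ) : ℝ) := (ENNReal.ofReal_natCast _).symm
    rw [e3, e4, ← mul_assoc, ← ENNReal.ofReal_mul h4.le]
    apply le_of_eq
    congr 2
    rw [hsq, hh]
    field_simp
  have hsum : ∑' i, ∫⁻ ω, ENNReal.ofReal (X i ω) ∂P ≠ ⊤ := by
    refine ne_top_of_le_ne_top ?_ (ENNReal.tsum_le_tsum hE)
    rw [ENNReal.tsum_mul_left, ENNReal.tsum_geometric]
    refine ENNReal.mul_ne_top (ENNReal.mul_ne_top (by simp) (gauss_const_finite _)) ?_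
    simp
  rw [← lintegral_tsum (fun i => (hXm i).ennreal_ofReal.aemeasurable)] at hsum
  have hae := ae_lt_top (Measurable.ennreal_tsum fun i => (hXm i).ennreal_ofReal) hsum
  filter_upwards [hae] with ω hω
  have h1 := ENNReal.tendsto_atTop_zero_of_tsum_ne_top hω.ne
  have h2 := (ENNReal.tendsto_toReal (by simp)).comp h1
  simp only [ENNReal.toReal_zero] at h2
  refine h2.congr fun i => ?_
  show ENNReal.toReal (ENNReal.ofReal (X i ω)) = X i ω
  exact ENNReal.toReal_ofReal (hX0 i ω)

end BM

lemma uS_pred_tendsto (φ : ℝ → ℝ) (hφ : Continuous φ) (h0 : φ 0 = 0) (t : ℝ) (ht : 0 < t) (c : ℝ)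
    (N : ℕ → ℕ) (hN : Tendsto N atTop atTop) :
    Tendsto (fun i => uS c (t / N i) (xP φ (t / N i)) (N i - 1)) atTop
      (𝓝 (1 + c * ∫ s in (0:ℝ)..t, Real.exp (φ s))) := by
  have hA := AS_tendsto φ hφ h0 t ht N hN
  have hlim : Tendsto (fun i => t / (N i : ℝ)) atTop (𝓝 0) :=
    (tendsto_const_div_atTop_nhds_zero_nat t).comp hN
  have hN1 := hN.eventually (eventually_ge_atTop 1)
  have hu : Tendsto (fun i => uS c (t / N i) (xP φ (t / N i)) (N i)) atTop
      (𝓝 (1 + c * ∫ s in (0:ℝ)..t, Real.exp (φ s))) :=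
    (hA.const_mul c).const_add 1
  have hmN : ∀ᶠ i in atTop, mS (xP φ (t / N i)) (N i) = Real.exp (φ t) := by
    filter_upwards [hN1] with i hi
    have hNpos : (0:ℝ) < N i := by exact_mod_cast hi
    rw [mS_xP φ h0]; congr 2; field_simp
  have h1 := hu.sub ((hlim.const_mul c).mul_const (Real.exp (φ t)))
  rw [mul_zero, zero_mul, sub_zero] at h1
  refine h1.congr' ?_
  filter_upwards [hN1, hmN] with i hi hm
  obtain ⟨k, hk⟩ : ∃ k, N i = k + 1 := ⟨N i - 1, by omega⟩
  rw [← hm]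
  have : uS c (t / N i) (xP φ (t / N i)) (k + 1) = uS c (t / N i) (xP φ (t / N i)) k +
      c * (t / N i) * mS (xP φ (t / N i)) (k + 1) := by
    rw [uS_succ, mS_succ]; ring
  have hk1 : N i - 1 = k := by omega
  rw [hk1, hk] at *
  rw [this]; ring

section BM2
variable {Ω : Type*} [MeasurableSpace Ω] {P : Measure Ω} {B : ℝ → Ω → ℝ}

lemma tendsto_four : Tendsto (fun i : ℕ => 4 ^ i) atTop atTop :=
  tendsto_pow_atTop_atTop_of_one_lt (by norm_num)

lemma A_tendsto (hB : IsBrownianMotion P B) (t : ℝ) (ht : 0 < t) (ω : Ω) :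
    Tendsto (fun i : ℕ => AS (t / (4 ^ i : ℕ)) (xP (pth B ω) (t / (4 ^ i : ℕ))) (4 ^ i)) atTop
      (𝓝 (A B t ω)) :=
  AS_tendsto (pth B ω) (pth_cont hB ω) (pth_zero hB ω) t ht (fun i => 4 ^ i) tendsto_four

lemma mS_four (hB : IsBrownianMotion P B) (t : ℝ) (ω : Ω) (i : ℕ) :
    mS (xP (pth B ω) (t / (4 ^ i : ℕ))) (4 ^ i) = M B t ω := by
  rw [mS_xP _ (pth_zero hB ω)]
  have : ((4 ^ i : ℕ) : ℝ) * (t / (4 ^ i : ℕ)) = t := by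
    have : ((4 ^ i : ℕ) : ℝ) ≠ 0 := by positivity
    field_simp
  rw [this]; rfl

lemma A_measurable (hB : IsBrownianMotion P B) (t : ℝ) (ht : 0 < t) : Measurable (A B t) := by
  refine measurable_of_tendsto_metrizable
    (f := fun (i : ℕ) ω => AS (t / (4 ^ i : ℕ)) (xP (pth B ω) (t / (4 ^ i : ℕ))) (4 ^ i)) ?_ ?_
  · intro i
    exact measurable_AS _ (X := fun j ω => xP (pth B ω) (t / (4 ^ i : ℕ)) j)
      fun j _ => meas_xP hB _ j
  · rw [tendsto_pi_nhds]
    exact A_tendsto hB t ht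

lemma M_measurable (hB : IsBrownianMotion P B) (t : ℝ) : Measurable (M B t) := by
  unfold M
  have := hB.measurable t
  fun_prop

lemma main_ineq (hB : IsBrownianMotion P B) (t : ℝ) (ht : 0 < t) (c : ℝ) (F : ℝ × ℝ → ENNReal)
    (hF : Continuous F) (K : ENNReal) (hK : K ≠ ⊤) (hFK : ∀ p, F p ≤ K) :
    ∫⁻ ω, (if 0 < 1 + c * A B t ω then
      F (M B t ω / ((1 + c * A B t ω) * (1 + c * A B t ω)), A B t ω / (1 + c * A B t ω)) *
        ENNReal.ofReal (Real.exp (2 * c * M B t ω / (1 + c * A B t ω) - 2 * c)) else 0) ∂P ≤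
    ∫⁻ ω, F (M B t ω, A B t ω) ∂P := by
  haveI := hB.isProbabilityMeasure
  set X : ℕ → ℕ → Ω → ℝ := fun i j ω => xP (pth B ω) (t / (4 ^ i : ℕ)) j with hX
  have hXm : ∀ i j, Measurable (X i j) := fun i j => meas_xP hB _ j
  have hh : ∀ i : ℕ, 0 < t / ((4 ^ i : ℕ) : ℝ) := fun i => by positivity
  have hD : ∀ i : ℕ, _ := fun i => discrete_ineq (hXm i) (indep_xP hB _ (hh i)) c _ (hh i)
    (law_xP hB _ (hh i)) (4 ^ i) F hF.measurable
  set L : ℕ → Ω → ENNReal := fun i ω =>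
    F (mS (fun j => X i j ω) (4 ^ i) / (uS c (t / (4 ^ i : ℕ)) (fun j => X i j ω) (4 ^ i) *
        uS c (t / (4 ^ i : ℕ)) (fun j => X i j ω) (4 ^ i - 1)),
      AS (t / (4 ^ i : ℕ)) (fun j => X i j ω) (4 ^ i) /
        uS c (t / (4 ^ i : ℕ)) (fun j => X i j ω) (4 ^ i)) *
      ENNReal.ofReal (DS c (t / (4 ^ i : ℕ)) (fun j => X i j ω) (4 ^ i)) with hL
  set R : ℕ → Ω → ENNReal := fun i ω =>
    F (mS (fun j => X i j ω) (4 ^ i), AS (t / (4 ^ i : ℕ)) (fun j => X i j ω) (4 ^ i)) with hR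
  have hLR : ∀ i, ∫⁻ ω, L i ω ∂P ≤ ∫⁻ ω, R i ω ∂P := hD
  have hmS : ∀ i k, Measurable fun ω => mS (fun j => X i j ω) k :=
    fun i k => measurable_mS fun j _ => hXm i j
  have hAS : ∀ i k, Measurable fun ω => AS (t / (4 ^ i : ℕ)) (fun j => X i j ω) k :=
    fun i k => measurable_AS _ fun j _ => hXm i j
  have huS : ∀ i k, Measurable fun ω => uS c (t / (4 ^ i : ℕ)) (fun j => X i j ω) k :=
    fun i k => measurable_uS _ _ fun j _ => hXm i j
  have hDS : ∀ i k, Measurable fun ω => DS c (t / (4 ^ i : ℕ)) (fun j => X i j ω) k :=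
    fun i k => measurable_DS _ _ fun j _ => hXm i j
  have hLm : ∀ i, Measurable (L i) := fun i =>
    (hF.measurable.comp (((hmS i _).div ((huS i _).mul (huS i _))).prodMk
      ((hAS i _).div (huS i _)))).mul (hDS i _).ennreal_ofReal
  have hRm : ∀ i, Measurable (R i) := fun i =>
    hF.measurable.comp ((hmS i _).prodMk (hAS i _))
  have hRt : Tendsto (fun i => ∫⁻ ω, R i ω ∂P) atTop (𝓝 (∫⁻ ω, F (M B t ω, A B t ω) ∂P)) := by
    refine tendsto_lintegral_of_dominated_convergence (fun _ => K) hRm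
      (fun i => Eventually.of_forall fun ω => hFK _) (by simpa using hK)
      (Eventually.of_forall fun ω => ?_)
    refine (hF.tendsto _).comp (Tendsto.prodMk_nhds ?_ (A_tendsto hB t ht ω))
    refine tendsto_const_nhds.congr fun i => (mS_four hB t ω i).symm
  have hFatou := lintegral_liminf_le (μ := P) (u := atTop) hLm
  refine le_trans (le_trans (lintegral_mono_ae ?_) hFatou)
    (le_trans (liminf_le_liminf (Eventually.of_forall hLR)) hRt.liminf_eq.le)
  filter_upwards [ae_small hB t ht] with ω hω
  split_ifs with hpos
  · have hD := DS_tendsto (pth B ω) (pth_cont hB ω) (pth_zero hB ω) t ht c hpos (fun i => 4 ^ i)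
      tendsto_four hω
    have hu' := uS_pred_tendsto (pth B ω) (pth_cont hB ω) (pth_zero hB ω) t ht c (fun i => 4 ^ i)
      tendsto_four
    have hA := A_tendsto hB t ht ω
    have hu : Tendsto (fun i => uS c (t / (4 ^ i : ℕ)) (fun j => X i j ω) (4 ^ i)) atTop
      (𝓝 (1 + c * A B t ω)) := (hA.const_mul c).const_add 1
    have hm : Tendsto (fun i => mS (fun j => X i j ω) (4 ^ i)) atTop (𝓝 (M B t ω)) :=
      tendsto_const_nhds.congr fun i => (mS_four hB t ω i).symm
    have hlim : Tendsto (fun i => L i ω) atTop (𝓝 (F (M B t ω / ((1 + c * A B t ω) * (1 + c * A B t ω)),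
        A B t ω / (1 + c * A B t ω)) *
        ENNReal.ofReal (Real.exp (2 * c * M B t ω / (1 + c * A B t ω) - 2 * c)))) := by
      refine ENNReal.Tendsto.mul ((hF.tendsto _).comp (Tendsto.prodMk_nhds
        (hm.div (hu.mul hu') (by positivity)) (hA.div hu hpos.ne'))) (Or.inr ENNReal.ofReal_ne_top)
        (ENNReal.tendsto_ofReal hD) (Or.inr (ne_top_of_le_ne_top hK (hFK _)))
    exact hlim.liminf_eq.ge
  · exact zero_le

end BM2

section BM3
variable {Ω : Type*} [MeasurableSpace Ω] {P : Measure Ω} {B : ℝ → Ω → ℝ}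

lemma A_nonneg (B : ℝ → Ω → ℝ) (t : ℝ) (ht : 0 < t) (ω : Ω) : 0 ≤ A B t ω :=
  intervalIntegral.integral_nonneg ht.le fun s _ => (Real.exp_pos _).le

lemma ineq_one (hB : IsBrownianMotion P B) (t : ℝ) (ht : 0 < t) (a : ℝ) (ha : 0 < a) :
    ∫⁻ ω, ENNReal.ofReal (a ^ 2 / (a + A B t ω) *
      Real.exp (2 * M B t ω / (a + A B t ω) - 2 / a)) ∂P ≤
    ∫⁻ ω, ENNReal.ofReal (a - A B t ω) ∂P := by
  have h := main_ineq hB t ht a⁻¹ (fun p => ENNReal.ofReal (a - |p.2|))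
    (ENNReal.continuous_ofReal.comp (by fun_prop))
    (ENNReal.ofReal a) ENNReal.ofReal_ne_top
    (fun p => ENNReal.ofReal_le_ofReal (by linarith [abs_nonneg p.2]))
  refine le_trans (le_of_eq (lintegral_congr fun ω => ?_)) (h.trans (le_of_eq
    (lintegral_congr fun ω => ?_)))
  · have hA := A_nonneg B t ht ω
    have hpos : 0 < 1 + a⁻¹ * A B t ω := by positivity
    have hpos2 : 0 < a + A B t ω := by positivity
    have e : 1 + a⁻¹ * A B t ω = (a + A B t ω) / a := by field_simp
    rw [if_pos hpos]
    simp only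
    rw [abs_of_nonneg (by positivity), e, ← ENNReal.ofReal_mul']
    · congr 2
      · field_simp; ring
      · congr 1
        field_simp
    · positivity
  · simp only
    rw [abs_of_nonneg (A_nonneg B t ht ω)]

lemma ineq_two (hB : IsBrownianMotion P B) (t : ℝ) (ht : 0 < t) (a : ℝ) (ha : 0 < a) :
    ∫⁻ ω, ENNReal.ofReal (a - A B t ω) ∂P ≤
    ∫⁻ ω, ENNReal.ofReal (a ^ 2 / (a + A B t ω) *
      Real.exp (2 * M B t ω / (a + A B t ω) - 2 / a)) ∂P := by
  set G : ℝ × ℝ → ENNReal := fun p => ENNReal.ofReal (a ^ 2 / (a + |p.2|) *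
      Real.exp (2 * p.1 / (a + |p.2|) - 2 / a)) with hG
  have hGc : Continuous G := by
    have : ∀ p : ℝ × ℝ, a + |p.2| ≠ 0 := fun p => by positivity
    refine ENNReal.continuous_ofReal.comp ?_
    fun_prop (disch := assumption)
  have h := fun K : ℕ => main_ineq hB t ht (-a⁻¹) (fun p => min (K : ENNReal) (G p))
    (continuous_const.min hGc) K (by simp) (fun p => min_le_left _ _)
  set L : ℕ → Ω → ENNReal := fun K ω => (if 0 < 1 + -a⁻¹ * A B t ω then
      min (K : ENNReal) (G (M B t ω / ((1 + -a⁻¹ * A B t ω) * (1 + -a⁻¹ * A B t ω)),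
          A B t ω / (1 + -a⁻¹ * A B t ω))) *
        ENNReal.ofReal (Real.exp (2 * -a⁻¹ * M B t ω / (1 + -a⁻¹ * A B t ω) - 2 * -a⁻¹)) else 0)
    with hL
  have hAm := A_measurable hB t ht
  have hMm := M_measurable hB t
  have hLm : ∀ K, Measurable (L K) := by
    intro K
    refine Measurable.ite (measurableSet_lt measurable_const (by fun_prop)) ?_ measurable_const
    refine (measurable_const.min (hGc.measurable.comp ?_)).mul ?_
    · fun_prop
    · fun_prop
  have hFatou := lintegral_liminf_le (μ := P) (u := atTop) hLm
  have hle : ∀ K, ∫⁻ ω, L K ω ∂P ≤ ∫⁻ ω, ENNReal.ofReal (a ^ 2 / (a + A B t ω) *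
      Real.exp (2 * M B t ω / (a + A B t ω) - 2 / a)) ∂P := by
    intro K
    refine (h K).trans (lintegral_mono fun ω => ?_)
    refine (min_le_right _ _).trans ?_
    simp only [hG]
    rw [abs_of_nonneg (A_nonneg B t ht ω)]
  refine le_trans (le_trans (lintegral_mono fun ω => ?_) hFatou)
    (le_trans (liminf_le_liminf (Eventually.of_forall hle)) (by simp))
  have hA := A_nonneg B t ht ω
  rcases le_or_gt a (A B t ω) with hc | hc
  · rw [ENNReal.ofReal_of_nonpos (by linarith)]
    exact zero_le
  · have hd : 0 < a - A B t ω := by linarith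
    have e : 1 + -a⁻¹ * A B t ω = (a - A B t ω) / a := by field_simp; ring
    have hpos : 0 < 1 + -a⁻¹ * A B t ω := by rw [e]; positivity
    have key : G (M B t ω / ((1 + -a⁻¹ * A B t ω) * (1 + -a⁻¹ * A B t ω)),
          A B t ω / (1 + -a⁻¹ * A B t ω)) *
        ENNReal.ofReal (Real.exp (2 * -a⁻¹ * M B t ω / (1 + -a⁻¹ * A B t ω) - 2 * -a⁻¹))
        = ENNReal.ofReal (a - A B t ω) := by
      simp only [hG]
      rw [abs_of_nonneg (by positivity), e, ← ENNReal.ofReal_mul' (Real.exp_pos _).le, mul_assoc,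
        ← Real.exp_add]
      have e2 : a + A B t ω / ((a - A B t ω) / a) = a ^ 2 / (a - A B t ω) := by
        field_simp; ring
      rw [e2]
      have e3 : 2 * (M B t ω / ((a - A B t ω) / a * ((a - A B t ω) / a))) / (a ^ 2 / (a - A B t ω)) -
          2 / a + (2 * -a⁻¹ * M B t ω / ((a - A B t ω) / a) - 2 * -a⁻¹) = 0 := by
        field_simp; ring
      rw [e3, Real.exp_zero]
      congr 1
      field_simp
    have hlim : Tendsto (fun K => L K ω) atTop (𝓝 (ENNReal.ofReal (a - A B t ω))) := by
      refine tendsto_const_nhds.congr' ?_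
      obtain ⟨K0, hK0⟩ := ENNReal.exists_nat_gt (r := G (M B t ω / ((1 + -a⁻¹ * A B t ω) *
        (1 + -a⁻¹ * A B t ω)), A B t ω / (1 + -a⁻¹ * A B t ω))) ENNReal.ofReal_ne_top
      filter_upwards [eventually_ge_atTop K0] with K hK
      simp only [hL]
      rw [if_pos hpos, min_eq_right, key]
      exact hK0.le.trans (by exact_mod_cast hK)
    exact hlim.liminf_eq.ge

lemma lintegral_M (hB : IsBrownianMotion P B) (s : ℝ) (hs : 0 ≤ s) :
    ∫⁻ ω, ENNReal.ofReal (Real.exp (B s ω - s / 2)) ∂P = 1 := by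
  have h1 := hB.gaussian_increments 0 s le_rfl hs
  simp only [hB.start, sub_zero] at h1
  have h2 : ∫⁻ ω, ENNReal.ofReal (Real.exp (B s ω - s / 2)) ∂P =
      ∫⁻ x, ENNReal.ofReal (Real.exp (x - s / 2)) ∂(gaussianReal 0 (Real.toNNReal s)) := by
    rw [← h1, lintegral_map (by fun_prop) (by exact hB.measurable s)]
  rw [h2, ← ofReal_integral_eq_lintegral_ofReal]
  · have h3 := mgf_gaussianReal (p := gaussianReal 0 (Real.toNNReal s)) (X := id) (μ := 0)
      (v := Real.toNNReal s) (by simp) 1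
    simp only [mgf, id, one_mul] at h3
    simp only [sub_eq_add_neg, Real.exp_add]
    rw [integral_mul_const, h3, ← Real.exp_add]
    simp [hs]
  · have := integrable_exp_mul_gaussianReal (μ := 0) (v := Real.toNNReal s) 1
    simp only [one_mul] at this
    simp only [sub_eq_add_neg, Real.exp_add]
    exact this.mul_const _
  · exact Eventually.of_forall fun x => (Real.exp_pos _).le

lemma lintegral_A (hB : IsBrownianMotion P B) (t : ℝ) (ht : 0 < t) :
    ∫⁻ ω, ENNReal.ofReal (A B t ω) ∂P = ENNReal.ofReal t := by
  have := hB.isProbabilityMeasure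
  have hj : Measurable (Function.uncurry fun (s : ℝ) (ω : Ω) => Real.exp (B s ω - s / 2)) := by
    refine measurable_uncurry_of_continuous_of_measurable (fun ω => ?_) fun s => ?_
    · have := hB.continuous_paths ω
      fun_prop
    · have := hB.measurable s
      fun_prop
  have h1 : ∀ ω, ENNReal.ofReal (A B t ω) =
      ∫⁻ s in Ioc 0 t, ENNReal.ofReal (Real.exp (B s ω - s / 2)) := by
    intro ω
    have hc := hB.continuous_paths ω
    unfold A
    rw [intervalIntegral.integral_of_le ht.le, ofReal_integral_eq_lintegral_ofReal]
    · have : Continuous fun s => Real.exp (B s ω - s / 2) := by fun_prop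
      exact (this.integrableOn_Icc).mono_set Ioc_subset_Icc_self
    · exact Eventually.of_forall fun x => (Real.exp_pos _).le
  simp only [h1]
  rw [lintegral_lintegral_swap]
  · rw [setLIntegral_congr_fun measurableSet_Ioc
      (fun s hs => lintegral_M hB s (le_of_lt hs.1))]
    simp
  · exact ((hj.comp measurable_swap).ennreal_ofReal).aemeasurable

end BM3

theorem asian_call_price (hB : IsBrownianMotion P B)
    (S₀ κ σ r τ : ℝ) (hS : 0 < S₀) (hκ : 0 < κ) (hσ : 0 < σ) (hτ : 0 < τ) :
    S₀ / (τ * σ ^ 2) * Real.exp (-r * τ) *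
        (∫ ω, max (A B (σ ^ 2 * τ) ω - σ ^ 2 * κ * τ / S₀) 0 ∂P)
      = S₀ * Real.exp (-r * τ) *
        (1 - κ / S₀ + σ ^ 2 * κ ^ 2 * τ / S₀ ^ 2 *
          ∫ ω, (σ ^ 2 * κ * τ / S₀ + A B (τ * σ ^ 2) ω)⁻¹ *
                Real.exp (2 * M B (τ * σ ^ 2) ω / (σ ^ 2 * κ * τ / S₀ + A B (τ * σ ^ 2) ω)
                  - 2 / (σ ^ 2 * κ * τ / S₀)) ∂P) := by
  have hprob := hB.isProbabilityMeasure
  rw [mul_comm τ (σ ^ 2)]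
  set t := σ ^ 2 * τ with htdef
  set a := σ ^ 2 * κ * τ / S₀ with hadef
  have ht : 0 < t := by positivity
  have ha : 0 < a := by positivity
  have hAm := A_measurable hB t ht
  have hMm := M_measurable hB t
  have hA0 := A_nonneg B t ht
  have hAi : Integrable (A B t) P := by
    refine ⟨hAm.aestronglyMeasurable, ?_⟩
    rw [hasFiniteIntegral_iff_ofReal (Eventually.of_forall hA0), lintegral_A hB t ht]
    exact ENNReal.ofReal_lt_top
  have hAE : ∫ ω, A B t ω ∂P = t := by
    rw [integral_eq_lintegral_of_nonneg_ae (Eventually.of_forall hA0) hAm.aestronglyMeasurable,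
      lintegral_A hB t ht, ENNReal.toReal_ofReal ht.le]
  have hput : ∫ ω, max (a - A B t ω) 0 ∂P = a ^ 2 * ∫ ω, (a + A B t ω)⁻¹ *
      Real.exp (2 * M B t ω / (a + A B t ω) - 2 / a) ∂P := by
    rw [← integral_const_mul]
    have hnn : ∀ ω, 0 ≤ a ^ 2 * ((a + A B t ω)⁻¹ *
        Real.exp (2 * M B t ω / (a + A B t ω) - 2 / a)) := fun ω => by
      have := hA0 ω
      positivity
    have hnn2 : ∀ ω, 0 ≤ max (a - A B t ω) 0 := fun ω => le_max_right _ _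
    rw [integral_eq_lintegral_of_nonneg_ae (Eventually.of_forall hnn2)
      (by fun_prop), integral_eq_lintegral_of_nonneg_ae (Eventually.of_forall hnn) (by fun_prop)]
    congr 1
    have e1 : ∀ ω, ENNReal.ofReal (max (a - A B t ω) 0) = ENNReal.ofReal (a - A B t ω) := by
      intro ω
      rw [ENNReal.ofReal_max]; simp
    simp only [e1]
    rw [le_antisymm (ineq_two hB t ht a ha) (ineq_one hB t ht a ha)]
    refine lintegral_congr fun ω => ?_
    congr 1
    rw [div_eq_mul_inv, mul_assoc]
  have hputi : Integrable (fun ω => max (a - A B t ω) 0) P :=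
    ((integrable_const a).sub hAi).pos_part
  have hcall : ∫ ω, max (A B t ω - a) 0 ∂P = t - a + ∫ ω, max (a - A B t ω) 0 ∂P := by
    have e : ∀ ω, max (A B t ω - a) 0 = (A B t ω - a) + max (a - A B t ω) 0 := by
      intro ω
      rcases le_total a (A B t ω) with h | h
      · rw [max_eq_left (by linarith), max_eq_right (by linarith)]; ring
      · rw [max_eq_right (by linarith), max_eq_left (by linarith)]; ring
    simp only [e]
    have hsub : Integrable (fun ω => A B t ω - a) P := hAi.sub (integrable_const a)
    rw [integral_add hsub hputi,
      integral_sub hAi (integrable_const a), hAE]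
    simp
  rw [hcall, hput]
  generalize (∫ ω, (a + A B t ω)⁻¹ *
      Real.exp (2 * M B t ω / (a + A B t ω) - 2 / a) ∂P) = I
  rw [hadef, htdef]
  field_simp
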